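/- For all positive integers s and t with t > s, the functions F_0 and F_3 satisfy t·K(s,t) < F_0(s,t) < F_3(s,t) < 72·t·K(s,t); equivalently, 1 < F_0(s,t)/(t·K(s,t)) < F_3(s,t)/(t·K(s,t)) < 72. -/

import Mathlib

/-!
Put `N = K'(s,t-1)` and divide every recursion by `K(s,t) = K(s,t-1) * K(s-1,N)`. The quotients
`F/K` then satisfy additive recursions: `F_3/K` at `(s,t)` exceeds its value at `(s,t-1)` by
`(2R(s,t-1) + 3)/K(s,t-1)` plus `(F_3/K)(s-1,N) / K(s,t-1)`, and similarly for `F_0`.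

* Lower bound: as `(F_0/K)(s-1,N) > N ≥ K(s,t-1) + 3`, each step in `t` adds at least `1`.
* `F_0 < F_3` holds because each term of the `F_3` recursion dominates that of `F_0`.
* Upper bound: if `(F_3/K)(s-1,N) ≤ c N` for all `N`, then a step in `t` adds at most
  `c K'/K + (2R + 3)/K`. For `s ≥ 3` one has `K' ≤ (1 + 7/2^s) K` (the sum of the `1/K(s,i)` is
  dominated by a geometric series of ratio `1/4`), `R ≤ (3/2^s) K` and `2^s ≤ K`, so that
  `(F_3/K)(s,t) ≤ c (1 + 8/2^s) t` as soon as `c ≥ 9`. An explicit computation gives `c = 12` for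
  `s = 2`, and the infinite product `12 * ∏_{s ≥ 3} (1 + 8/2^s)` stays below `72`: its partial
  products are at most `72 * 2^s / (2^s + 16)`.

The three inequalities of the theorem hold for all `s, t ≥ 1`.
-/

/-- The pair `(K(s,t), K'(s,t))` of auxiliary functions, defined for positive integers `s, t`:
`K(1,t) = 2`, `K'(1,t) = 5`; `K(s,1) = 2^s`, `K'(s,1) = 2^s + 3`; and for `s, t > 1`,
`K(s,t) = K(s,t-1) * K(s-1, K'(s,t-1))` and
`K'(s,t) = K'(s,t-1) * K(s-1, K'(s,t-1)) + K'(s-1, K'(s,t-1))`.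
(The value at arguments equal to `0` is junk.) -/
def KK : ℕ → ℕ → ℕ × ℕ
  | 0, _ => (0, 0)
  | 1, _ => (2, 5)
  | _+2, 0 => (0, 0)
  | s+2, 1 => (2^(s+2), 2^(s+2) + 3)
  | s+2, t+2 =>
    let p := KK (s+2) (t+1)
    let q := KK (s+1) p.2
    (p.1 * q.1, p.2 * q.1 + q.2)
termination_by s t => (s, t)

/-- The function `K(s,t)`. -/
def K (s t : ℕ) : ℕ := (KK s t).1

/-- The function `K'(s,t)`. -/
def K' (s t : ℕ) : ℕ := (KK s t).2

/-- The function `R(s,t)` (root triangles minus teeth of `X(s,t)`), defined for positive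
integers `s, t`: `R(1,t) = 0`, `R(s,1) = 0`, and
`R(s,t) = 2 * K(s-1, K'(s,t-1)) + R(s-1, K'(s,t-1))` for `s, t > 1`.
(The value at arguments equal to `0` is junk.) -/
def R : ℕ → ℕ → ℕ
  | 0, _ => 0
  | 1, _ => 0
  | _+2, 0 => 0
  | _+2, 1 => 0
  | s+2, t+2 => 2 * K (s+1) (K' (s+2) (t+1)) + R (s+1) (K' (s+2) (t+1))
termination_by s t => (s, t)

/-- The face number `F_0(s,t)` of the sphere `S(s,t)`:
`F_0(1,t) = 2t + 7` for `t > 1`, `F_0(s,1) = 2^(s+1) + 5`, and for `s, t > 1`,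
`F_0(s,t) = K(s-1,K'(s,t-1)) * (F_0(s,t-1) + R(s,t-1) - 2) + F_0(s-1,K'(s,t-1))`.
(The value at arguments equal to `0` is junk; the subtraction never truncates.) -/
def F0 : ℕ → ℕ → ℕ
  | 0, _ => 0
  | _+1, 0 => 0
  | s+1, 1 => 2^(s+2) + 5
  | 1, t+2 => 2*(t+2) + 7
  | s+2, t+2 =>
      K (s+1) (K' (s+2) (t+1)) * (F0 (s+2) (t+1) + R (s+2) (t+1) - 2)
        + F0 (s+1) (K' (s+2) (t+1))
termination_by s t => (s, t)

/-- The face number `F_1(s,t)` of the sphere `S(s,t)`: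
`F_1(1,t) = 10t + 15` for `t > 1`, `F_1(s,1) = 3 * 2^(s+1) + 9`, and for `s, t > 1`,
`F_1(s,t) = K(s-1,K'(s,t-1)) * (F_1(s,t-1) + 3K'(s,t-1) + 3R(s,t-1) - 4) + F_1(s-1,K'(s,t-1))`.
(The value at arguments equal to `0` is junk; the subtraction never truncates.) -/
def F1 : ℕ → ℕ → ℕ
  | 0, _ => 0
  | _+1, 0 => 0
  | s+1, 1 => 3 * 2^(s+2) + 9
  | 1, t+2 => 10*(t+2) + 15
  | s+2, t+2 =>
      K (s+1) (K' (s+2) (t+1))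
          * (F1 (s+2) (t+1) + 3 * K' (s+2) (t+1) + 3 * R (s+2) (t+1) - 4)
        + F1 (s+1) (K' (s+2) (t+1))
termination_by s t => (s, t)

/-- The face number `F_2(s,t)` of the sphere `S(s,t)`:
`F_2(1,t) = 16t + 12` for `t > 1`, `F_2(s,1) = 2^(s+3) + 8`, and for `s, t > 1`,
`F_2(s,t) = K(s-1,K'(s,t-1)) * (F_2(s,t-1) + 3K'(s,t-1) + 4R(s,t-1) + 1) + F_2(s-1,K'(s,t-1))`.
(The value at arguments equal to `0` is junk.) -/
def F2 : ℕ → ℕ → ℕ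
  | 0, _ => 0
  | _+1, 0 => 0
  | s+1, 1 => 2^(s+4) + 8
  | 1, t+2 => 16*(t+2) + 12
  | s+2, t+2 =>
      K (s+1) (K' (s+2) (t+1))
          * (F2 (s+2) (t+1) + 3 * K' (s+2) (t+1) + 4 * R (s+2) (t+1) + 1)
        + F2 (s+1) (K' (s+2) (t+1))
termination_by s t => (s, t)

/-- The face number `F_3(s,t)` of the sphere `S(s,t)`:
`F_3(1,t) = 8t + 4` for `t > 1`, `F_3(s,1) = 2^(s+2) + 4`, and for `s, t > 1`,
`F_3(s,t) = K(s-1,K'(s,t-1)) * (F_3(s,t-1) + 2R(s,t-1) + 3) + F_3(s-1,K'(s,t-1))`.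
(The value at arguments equal to `0` is junk.) -/
def F3 : ℕ → ℕ → ℕ
  | 0, _ => 0
  | _+1, 0 => 0
  | s+1, 1 => 2^(s+3) + 4
  | 1, t+2 => 8*(t+2) + 4
  | s+2, t+2 =>
      K (s+1) (K' (s+2) (t+1)) * (F3 (s+2) (t+1) + 2 * R (s+2) (t+1) + 3)
        + F3 (s+1) (K' (s+2) (t+1))
termination_by s t => (s, t)

/-! ### Recursion equations -/

theorem K_one (t : ℕ) : K 1 t = 2 := by simp [K, KK]

theorem K'_one (t : ℕ) : K' 1 t = 5 := by simp [K', KK]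

theorem K_base (s : ℕ) : K (s+1) 1 = 2^(s+1) := by
  cases s <;> simp [K, KK]

theorem K'_base (s : ℕ) : K' (s+1) 1 = 2^(s+1) + 3 := by
  cases s <;> simp [K', KK]

theorem K_step (s t : ℕ) :
    K (s+2) (t+2) = K (s+2) (t+1) * K (s+1) (K' (s+2) (t+1)) := by
  simp [K, K', KK]

theorem K'_step (s t : ℕ) :
    K' (s+2) (t+2) = K' (s+2) (t+1) * K (s+1) (K' (s+2) (t+1))
      + K' (s+1) (K' (s+2) (t+1)) := by
  simp [K, K', KK]

theorem F0_one (t : ℕ) : F0 1 (t+1) = 2*(t+1) + 7 := by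
  cases t <;> simp [F0]

theorem F3_one (t : ℕ) : F3 1 (t+1) = 8*(t+1) + 4 := by
  cases t <;> simp [F3]

theorem F0_base (s : ℕ) : F0 (s+1) 1 = 2^(s+2) + 5 := by simp [F0]

theorem F3_base (s : ℕ) : F3 (s+1) 1 = 2^(s+3) + 4 := by simp [F3]

theorem F0_step (s t : ℕ) : F0 (s+2) (t+2) =
    K (s+1) (K' (s+2) (t+1)) * (F0 (s+2) (t+1) + R (s+2) (t+1) - 2)
      + F0 (s+1) (K' (s+2) (t+1)) := by
  rw [F0]

theorem F3_step (s t : ℕ) : F3 (s+2) (t+2) =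
    K (s+1) (K' (s+2) (t+1)) * (F3 (s+2) (t+1) + 2 * R (s+2) (t+1) + 3)
      + F3 (s+1) (K' (s+2) (t+1)) := by
  rw [F3]

theorem R_step (s t : ℕ) : R (s+2) (t+2) =
    2 * K (s+1) (K' (s+2) (t+1)) + R (s+1) (K' (s+2) (t+1)) := by
  rw [R]

/-! ### Lower bounds -/

theorem K_add_three_le_K' (s t : ℕ) : K (s+1) (t+1) + 3 ≤ K' (s+1) (t+1) := by
  induction s generalizing t with
  | zero => simp [K_one, K'_one]
  | succ s ihs =>
    induction t with
    | zero => simp [K_base, K'_base]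
    | succ t iht =>
      obtain ⟨n, hn⟩ : ∃ n, K' (s+2) (t+1) = n + 1 :=
        Nat.exists_eq_succ_of_ne_zero
          (by change K (s+2) (t+1) + 3 ≤ K' (s+2) (t+1) at iht; omega)
      have h := ihs n
      rw [K_step, K'_step]
      rw [hn] at iht ⊢
      nlinarith [Nat.mul_le_mul_right (K (s+1) (n+1)) iht]

theorem K'_eq_succ (s t : ℕ) : ∃ n, K' (s+1) (t+1) = n + 1 :=
  Nat.exists_eq_succ_of_ne_zero (by have := K_add_three_le_K' s t; omega)

theorem two_pow_le_K (s t : ℕ) : 2^(s+1) ≤ K (s+1) (t+1) := by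
  induction s generalizing t with
  | zero => simp [K_one]
  | succ s ihs =>
    induction t with
    | zero => simp [K_base]
    | succ t iht =>
      obtain ⟨n, hn⟩ := K'_eq_succ (s+1) t
      rw [K_step, hn]
      exact iht.trans (Nat.le_mul_of_pos_right _ (lt_of_lt_of_le (by positivity) (ihs n)))

theorem F0_lower (s t : ℕ) : (t+1) * K (s+1) (t+1) < F0 (s+1) (t+1) := by
  induction s generalizing t with
  | zero => rw [zero_add, K_one, F0_one]; omega
  | succ s ihs =>
    induction t with
    | zero =>
      rw [zero_add, K_base, F0_base, show s + 1 + 2 = (s + 1 + 1) + 1 by ring, pow_succ 2 (s+1+1)]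
      omega
    | succ t iht =>
      have hK' : K (s+2) (t+1) + 3 ≤ K' (s+2) (t+1) := K_add_three_le_K' (s+1) t
      replace iht : (t+1) * K (s+2) (t+1) < F0 (s+2) (t+1) := iht
      obtain ⟨n, hn⟩ := K'_eq_succ (s+1) t
      have h := ihs n
      rw [K_step, F0_step]
      rw [hn] at hK' ⊢
      -- The truncated subtraction is estimated first: it loses at most `2`.
      have h1 : (t+1+1) * K (s+2) (t+1) ≤ (F0 (s+2) (t+1) + R (s+2) (t+1) - 2) + (n+1) := by
        have : (t+1+1) * K (s+2) (t+1) = (t+1) * K (s+2) (t+1) + K (s+2) (t+1) := by ring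
        omega
      have h2 := Nat.mul_le_mul_left (K (s+1) (n+1)) h1
      nlinarith

theorem F0_lt_F3 (s t : ℕ) : F0 (s+1) (t+1) < F3 (s+1) (t+1) := by
  induction s generalizing t with
  | zero => rw [zero_add, F0_one, F3_one]; omega
  | succ s ihs =>
    induction t with
    | zero =>
      have : 0 < 2^s := by positivity
      rw [zero_add, F0_base, F3_base, pow_add 2 (s+1) 2, pow_add 2 (s+1) 3]
      omega
    | succ t iht =>
      obtain ⟨n, hn⟩ := K'_eq_succ (s+1) t
      replace iht : F0 (s+2) (t+1) < F3 (s+2) (t+1) := iht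
      rw [F0_step, F3_step, hn]
      exact add_lt_add_of_le_of_lt (Nat.mul_le_mul_left _ (by omega)) (ihs n)

/-! ### Upper bounds for `R` and `K'` -/

/-- For `s ≥ 2`, `R ≤ (3/2^s) K`. -/
theorem R_upper (s t : ℕ) : 2^(s+2) * R (s+2) (t+1) ≤ 3 * K (s+2) (t+1) := by
  induction s generalizing t with
  | zero =>
    cases t with
    | zero => simp [R]
    | succ t =>
      have h : 2^2 ≤ K 2 (t+1) := two_pow_le_K 1 t
      rw [R_step, K_step, zero_add, zero_add, K_one]
      simp only [R]
      omega
  | succ s ihs =>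
    cases t with
    | zero => simp [R]
    | succ t =>
      obtain ⟨n, hn⟩ := K'_eq_succ (s+2) t
      have h1 := two_pow_le_K (s+2) t
      have h2 : R (s+2) (n+1) ≤ K (s+2) (n+1) := by
        have h3 := ihs n
        have h4 : 3 ≤ 2^(s+2) := by
          have : 0 < 2^s := by positivity
          rw [pow_add]; omega
        have := Nat.mul_le_mul_right (R (s+2) (n+1)) h4
        omega
      rw [R_step, K_step, hn]
      calc 2^(s+1+2) * (2 * K (s+2) (n+1) + R (s+2) (n+1))
          ≤ K (s+3) (t+1) * (3 * K (s+2) (n+1)) :=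
            Nat.mul_le_mul h1 (by omega)
        _ = _ := by ring

theorem K'_two (t : ℕ) : K' 2 (t+1) + 5 = 3 * K 2 (t+1) := by
  induction t with
  | zero => simp [K_base 1, K'_base 1]
  | succ t ih =>
    rw [K_step 0, K'_step 0, zero_add, zero_add, K_one, K'_one]
    omega

/-- For `s ≥ 3`, `K'/K ≤ 1 + 7/2^s - 4/K`; the last term makes the induction on `t` work. -/
theorem K'_upper (s t : ℕ) :
    2^(s+3) * (K' (s+3) (t+1) + 4) ≤ (2^(s+3) + 7) * K (s+3) (t+1) := by
  induction s generalizing t with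
  | zero =>
    induction t with
    | zero => simp [K_base 2, K'_base 2]
    | succ t iht =>
      obtain ⟨n, hn⟩ := K'_eq_succ 2 t
      have h := K'_two n
      have h1 := two_pow_le_K 1 n
      rw [K_step 1, K'_step 1, hn]
      rw [zero_add, hn] at iht
      have := Nat.mul_le_mul_right (K 2 (n+1)) iht
      norm_num at *
      nlinarith
  | succ s ihs =>
    induction t with
    | zero =>
      rw [zero_add, K_base, K'_base]
      exact le_of_eq (by ring)
    | succ t iht =>
      obtain ⟨n, hn⟩ := K'_eq_succ (s+3) t
      have h : K' (s+3) (n+1) ≤ 3 * K (s+3) (n+1) := by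
        have h2 := ihs n
        have h3 : 2^(s+3) + 7 ≤ 3 * 2^(s+3) := by
          have : 0 < 2^s := by positivity
          rw [pow_add]; omega
        have h4 := Nat.mul_le_mul_right (K (s+3) (n+1)) h3
        have h5 : 0 < 2^(s+3) := by positivity
        refine Nat.le_of_mul_le_mul_left ?_ h5
        nlinarith
      have h1 : 4 ≤ K (s+3) (n+1) := by
        have h2 : 2^(s+3) ≤ K (s+3) (n+1) := two_pow_le_K (s+2) n
        have : 0 < 2^s := by positivity
        rw [pow_add] at h2
        omega
      rw [K_step, K'_step, hn]
      rw [hn] at iht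
      have h6 := Nat.mul_le_mul_right (K (s+3) (n+1)) iht
      have h7 := Nat.mul_le_mul_left (2^(s+1+3))
        (show K' (s+3) (n+1) + 4 ≤ 4 * K (s+3) (n+1) by omega)
      nlinarith

theorem R_two_le (t : ℕ) : R 2 (t+1) ≤ 4 := by
  cases t with
  | zero => simp [R]
  | succ t => rw [R_step 0, zero_add, K_one]; simp [R]

/-! ### Upper bound for `F_3` -/

theorem F3_two (t : ℕ) : F3 2 (t+1) ≤ 12 * ((t+1) * K 2 (t+1)) := by
  induction t with
  | zero => simp [K_base 1, F3_base 1]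
  | succ t ih =>
    obtain ⟨n, hn⟩ := K'_eq_succ 1 t
    have h := K'_two t
    have hR := R_two_le t
    rw [F3_step 0, K_step 0, zero_add, zero_add, hn, K_one, F3_one]
    rw [hn] at h
    nlinarith

/-- For `s ≥ 3`, a linear bound `F_3/K ≤ c t` at level `s-1` gives `F_3/K ≤ c (1 + 8/2^s) t` at
level `s`. -/
theorem F3_level_step (s : ℕ) (c : ℚ) (hc : 9 ≤ c)
    (h : ∀ n, (F3 (s+2) (n+1) : ℚ) ≤ c * ((n+1) * K (s+2) (n+1))) (t : ℕ) :
    (F3 (s+3) (t+1) : ℚ) ≤ c * (1 + 8 / 2^(s+3)) * ((t+1) * K (s+3) (t+1)) := by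
  have hp : (0:ℚ) < 2^(s+3) := by positivity
  induction t with
  | zero =>
    rw [zero_add, K_base, F3_base]
    push_cast
    have : c * (1 + 8 / 2^(s+3)) * ((0+1) * 2^(s+2+1)) = c * (2^(s+3) + 8) := by
      field_simp
      ring
    rw [this, show s + 2 + 3 = (s + 3) + 2 by ring, pow_add (2:ℚ) (s+3) 2]
    nlinarith
  | succ t iht =>
    obtain ⟨n, hn⟩ := K'_eq_succ (s+2) t
    have hF := h n
    have hK' : (2:ℚ)^(s+3) * ((n+1) + 4) ≤ (2^(s+3) + 7) * K (s+3) (t+1) := by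
      have := K'_upper s t
      rw [hn] at this
      exact_mod_cast this
    have hR : (2:ℚ)^(s+3) * R (s+3) (t+1) ≤ 3 * K (s+3) (t+1) := by
      exact_mod_cast R_upper (s+1) t
    have hK : (2:ℚ)^(s+3) ≤ K (s+3) (t+1) := by exact_mod_cast two_pow_le_K (s+2) t
    rw [F3_step, K_step, hn]
    push_cast
    set k : ℚ := (K (s+2) (n+1) : ℚ)
    set κ : ℚ := (K (s+3) (t+1) : ℚ)
    set r : ℚ := (R (s+3) (t+1) : ℚ)
    have hk : 0 ≤ k := Nat.cast_nonneg _
    -- the increment of `F_3/K` in one step of `t`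
    have key : 2 * r + 3 + c * (n+1) ≤ c * (1 + 8 / 2^(s+3)) * κ := by
      have e : c * (1 + 8 / 2^(s+3)) * κ = c * (2^(s+3) + 8) * κ / 2^(s+3) := by
        field_simp
      rw [e, le_div_iff₀ hp]
      have h1 : c * (2^(s+3) * ((n+1) + 4)) ≤ c * ((2^(s+3) + 7) * κ) :=
        mul_le_mul_of_nonneg_left hK' (by linarith)
      nlinarith [mul_nonneg (by linarith : (0:ℚ) ≤ c) hp.le]
    calc k * ((F3 (s+3) (t+1) : ℚ) + 2 * r + 3) + F3 (s+2) (n+1)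
        ≤ k * (c * (1 + 8 / 2^(s+3)) * ((t+1) * κ) + 2 * r + 3) + c * ((n+1) * k) := by
          gcongr
      _ = k * (c * (1 + 8 / 2^(s+3)) * ((t+1) * κ) + (2 * r + 3 + c * (n+1))) := by ring
      _ ≤ k * (c * (1 + 8 / 2^(s+3)) * ((t+1) * κ) + c * (1 + 8 / 2^(s+3)) * κ) := by
          gcongr
      _ = _ := by ring

/-- The constants `72 * 2^s / (2^s + 16)` dominate the partial products of
`12 * ∏_{s ≥ 3} (1 + 8/2^s)`, with equality at `s = 3`. -/
theorem F3_upper_aux (s t : ℕ) :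
    (F3 (s+3) (t+1) : ℚ) ≤ 72 * 2^(s+3) / (2^(s+3) + 16) * ((t+1) * K (s+3) (t+1)) := by
  induction s generalizing t with
  | zero =>
    have := F3_level_step 0 12 (by norm_num) (fun n => by exact_mod_cast F3_two n) t
    norm_num at this ⊢
    exact this
  | succ s ih =>
    have hp : (8:ℚ) ≤ 2^(s+3) := by
      rw [pow_add]
      nlinarith [one_le_pow₀ (n := s) (by norm_num : (1:ℚ) ≤ 2)]
    refine (F3_level_step (s+1) _ ?_ ih t).trans ?_
    · rw [le_div_iff₀ (by positivity)]
      linarith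
    · refine mul_le_mul_of_nonneg_right ?_ (by positivity)
      rw [show s + 1 + 3 = (s + 3) + 1 by ring, pow_succ _ (s+3)]
      generalize (2:ℚ)^(s+3) = p at hp
      have hp0 : 0 < p := by linarith
      have e : 72 * p / (p + 16) * (1 + 8 / (p * 2)) = 72 * (p + 4) / (p + 16) := by
        field_simp
        ring
      rw [e, div_le_div_iff₀ (by positivity) (by positivity)]
      nlinarith

theorem F3_upper (s t : ℕ) : F3 (s+1) (t+1) < 72 * ((t+1) * K (s+1) (t+1)) := by
  match s with
  | 0 => rw [zero_add, K_one, F3_one]; omega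
  | 1 =>
    have h := F3_two t
    have h1 : 0 < (t+1) * K 2 (t+1) :=
      Nat.mul_pos (by omega) (lt_of_lt_of_le (by norm_num) (two_pow_le_K 1 t))
    change F3 2 (t+1) < 72 * ((t+1) * K 2 (t+1))
    omega
  | s+2 =>
    have h := F3_upper_aux s t
    have hK : 0 < K (s+3) (t+1) :=
      lt_of_lt_of_le (by positivity) (two_pow_le_K (s+2) t)
    have h1 : (0:ℚ) < (t+1) * K (s+3) (t+1) := by positivity
    have h2 : (72:ℚ) * 2^(s+3) / (2^(s+3) + 16) < 72 := by
      rw [div_lt_iff₀ (by positivity)]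
      linarith
    have h3 := h.trans_lt (mul_lt_mul_of_pos_right h2 h1)
    exact_mod_cast h3

/-- Proposition (face-asymptotics, first part): for all positive integers `s` and `t`
with `t > s`, `1 < F_0(s,t)/(t*K(s,t)) < F_3(s,t)/(t*K(s,t)) < 72`; in integer form,
`t * K(s,t) < F_0(s,t) < F_3(s,t) < 72 * t * K(s,t)`. -/
theorem F0_F3_bounds (s t : ℕ) (hs : 0 < s) (hts : s < t) :
    t * K s t < F0 s t ∧ F0 s t < F3 s t ∧ F3 s t < 72 * (t * K s t) := by
  obtain ⟨s, rfl⟩ := Nat.exists_eq_succ_of_ne_zero hs.ne'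
  obtain ⟨t, rfl⟩ := Nat.exists_eq_succ_of_ne_zero (by omega : t ≠ 0)
  exact ⟨F0_lower s t, F0_lt_F3 s t, F3_upper s t⟩
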